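/- Let C = ⟨(x+1)^a + u(x+1)^{t₁} h₁(x) + u²(x+1)^{t₂} h₂(x), u(x+1)^{2^{s-1}} + u²(x+1)^{t₃} h₃(x), u²(x+1)^{2^s−a}⟩ be an ideal of 𝓡, where 1 ≤ a ≤ 2^s − 1 and h₁, h₂, h₃ ∈ 𝓚, t₁, t₂, t₃ ≥ 0. If C is self-dual, then u²(x+1)^k ∉ C for every 0 ≤ k < 2^s − a; equivalently, min{k ≥ 0 : u²(x+1)^k ∈ C} = 2^s − a. -/

import Mathlib

noncomputable section

open Polynomial

/-- The finite field `GF(2^m)`. -/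
abbrev Fq (m : ℕ) : Type := GaloisField 2 m

/-- The ring `R₃ = F[u]/⟨u³⟩`. -/
abbrev R3 (m : ℕ) : Type := AdjoinRoot (X ^ 3 : (Fq m)[X])

/-- The polynomial `x^{2^s} + 1` over `R₃`. -/
abbrev gR (m s : ℕ) : (R3 m)[X] := X ^ (2 ^ s) + 1

/-- The polynomial `x^{2^s} + 1` over `F`. -/
abbrev gK (m s : ℕ) : (Fq m)[X] := X ^ (2 ^ s) + 1

/-- The ring `𝓡 = R₃[x]/⟨x^{2^s}+1⟩`. -/
abbrev RR (m s : ℕ) : Type := AdjoinRoot (gR m s)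

/-- The ring `𝓚 = F[x]/⟨x^{2^s}+1⟩`. -/
abbrev KK (m s : ℕ) : Type := AdjoinRoot (gK m s)

/-- The element `u` of `R₃`. -/
def uu (m : ℕ) : R3 m := AdjoinRoot.root _

/-- The element `u` of `𝓡`. -/
def uR (m s : ℕ) : RR m s := algebraMap (R3 m) (RR m s) (uu m)

/-- The element `x` of `𝓡`. -/
def xR (m s : ℕ) : RR m s := AdjoinRoot.root _

/-- The element `x` of `𝓚`. -/
def xK (m s : ℕ) : KK m s := AdjoinRoot.root _

lemma gR_monic (m s : ℕ) : (gR m s).Monic := by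
  have h : (gR m s) = X ^ (2 ^ s) + C 1 := by simp [gR]
  rw [h]; exact monic_X_pow_add_C _ (by positivity)

lemma gK_monic (m s : ℕ) : (gK m s).Monic := by
  have h : (gK m s) = X ^ (2 ^ s) + C 1 := by simp [gK]
  rw [h]; exact monic_X_pow_add_C _ (by positivity)

/-- The standard representative (of degree `< 2^s`) of an element of `𝓡`. -/
def repR (m s : ℕ) (c : RR m s) : (R3 m)[X] := AdjoinRoot.modByMonicHom (gR_monic m s) c

/-- The standard representative (of degree `< 2^s`) of an element of `𝓚`. -/
def repK (m s : ℕ) (c : KK m s) : (Fq m)[X] := AdjoinRoot.modByMonicHom (gK_monic m s) c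

/-- The `j`-th coefficient of the standard representative of `c ∈ 𝓡`. -/
def coeffR (m s : ℕ) (c : RR m s) (j : ℕ) : R3 m := (repR m s c).coeff j

/-- The dot product on `𝓡`. -/
def dotR (m s : ℕ) (c d : RR m s) : R3 m :=
  ∑ j ∈ Finset.range (2 ^ s), coeffR m s c j * coeffR m s d j

/-- The dual of a set of codewords. -/
def dualSet (m s : ℕ) (S : Set (RR m s)) : Set (RR m s) :=
  {c | ∀ d ∈ S, dotR m s c d = 0}

/-- A cyclic code (ideal of `𝓡`) is self-dual if it coincides with its dual. -/
def IsSelfDual (m s : ℕ) (C : Ideal (RR m s)) : Prop :=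
  (C : Set (RR m s)) = dualSet m s (C : Set (RR m s))

/-- The annihilator of a set of codewords. -/
def annSet (m s : ℕ) (S : Set (RR m s)) : Set (RR m s) :=
  {c | ∀ d ∈ S, c * d = 0}

/-- The reciprocal `c*(x) = x^{deg c} c(x⁻¹)` of an element of `𝓡`. -/
def recip (m s : ℕ) (c : RR m s) : RR m s :=
  xR m s ^ (repR m s c).natDegree *
    Polynomial.aeval (Ring.inverse (xR m s)) (repR m s c)

/-- Reduction `R₃ → F` modulo `u`. -/
def epsR3 (m : ℕ) : R3 m →+* Fq m :=
  AdjoinRoot.lift (RingHom.id (Fq m)) 0 (by simp)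

lemma xK_pow_add_one (m s : ℕ) : (xK m s) ^ (2 ^ s) + 1 = 0 := by
  have h := AdjoinRoot.eval₂_root (gK m s)
  simpa [gK, xK] using h

lemma xR_pow_add_one (m s : ℕ) : (xR m s) ^ (2 ^ s) + 1 = 0 := by
  have h := AdjoinRoot.eval₂_root (gR m s)
  simpa [gR, xR] using h

/-- Reduction `μ : 𝓡 → 𝓚` modulo `u`. -/
def muRK (m s : ℕ) : RR m s →+* KK m s :=
  AdjoinRoot.lift ((algebraMap (Fq m) (KK m s)).comp (epsR3 m)) (xK m s) (by
    simp only [gR, eval₂_add, eval₂_pow, eval₂_X, eval₂_one]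
    exact xK_pow_add_one m s)

/-- The natural inclusion `𝓚 → 𝓡`. -/
def KtoR (m s : ℕ) : KK m s →+* RR m s :=
  AdjoinRoot.lift ((algebraMap (R3 m) (RR m s)).comp (algebraMap (Fq m) (R3 m))) (xR m s) (by
    simp only [gK, eval₂_add, eval₂_pow, eval₂_X, eval₂_one]
    exact xR_pow_add_one m s)

/-- The `i`-th torsion code of a set `S ⊆ 𝓡`. -/
def TorSet (m s : ℕ) (S : Set (RR m s)) (i : ℕ) : Set (KK m s) :=
  muRK m s '' {f | (uR m s) ^ i * f ∈ S}

/-- The torsion degree `T_i`: the (unique) `k` with `Tor_i = ⟨(x+1)^k⟩`. -/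
def Tdeg (m s : ℕ) (S : Set (RR m s)) (i : ℕ) : ℕ :=
  sInf {k | TorSet m s S i =
    ((Ideal.span {(xK m s + 1) ^ k} : Ideal (KK m s)) : Set (KK m s))}

/-- Substitution `h(x) ↦ h(x⁻¹)` on `𝓚`. -/
def invSub (m s : ℕ) (h : KK m s) : KK m s :=
  Polynomial.aeval (Ring.inverse (xK m s)) (repK m s h)

/-!
The variable `x` is an isometry of the dot product, so `x + 1 = x(1 + x⁻¹)` gives
`(x+1)^a c · d = x^a c · (x+1)^a d`. If a self-orthogonal ideal contains both `g = (x+1)^a + u f`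
and `u²(x+1)^k`, it contains `w = u² x^a (x+1)^k`. Since `u³ = 0`, the term `u f` does not
contribute to `w · g`, so `0 = w · g = u² ((x+1)^{a+k} · 1)`. For `a + k < 2^s` the polynomial
`(x+1)^{a+k}` is reduced and has constant coefficient `1`, which forces `u² = 0`, a contradiction.
-/

/-- The ambient ring `A[x]/⟨xⁿ + 1⟩` of the negacyclic codes of length `n` over `A`. -/
abbrev NegacyclicRing (A : Type*) [CommRing A] (n : ℕ) : Type _ :=
  AdjoinRoot (X ^ n + 1 : A[X])

namespace NegacyclicRing

variable {A : Type*} [CommRing A] {n : ℕ}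

/-- The class of the variable, multiplication by which is the negacyclic shift. -/
abbrev x : NegacyclicRing A n := AdjoinRoot.root _

lemma x_mul_mk (p : A[X]) :
    (x * AdjoinRoot.mk _ p : NegacyclicRing A n) =
      AdjoinRoot.mk _ (X * p - C (p.coeff (n - 1)) * (X ^ n + 1)) := by
  rw [map_sub, map_mul, map_mul, AdjoinRoot.mk_self, mul_zero, sub_zero, AdjoinRoot.mk_X]

variable [NeZero n]

lemma monic_modulus : (X ^ n + 1 : A[X]).Monic := by
  simpa only [C_1] using monic_X_pow_add_C (1 : A) (NeZero.ne n)

lemma degree_modulus [Nontrivial A] : (X ^ n + 1 : A[X]).degree = n := by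
  simpa only [C_1] using degree_X_pow_add_C (Nat.pos_of_neZero n) (1 : A)

lemma exists_mk_eq (c : NegacyclicRing A n) :
    ∃ p : A[X], p.degree < n ∧ AdjoinRoot.mk _ p = c := by
  obtain _ | _ := subsingleton_or_nontrivial A
  · obtain ⟨p, rfl⟩ := AdjoinRoot.mk_surjective c
    exact ⟨p, by simp [degree_of_subsingleton], rfl⟩
  refine ⟨AdjoinRoot.modByMonicHom monic_modulus c, ?_, AdjoinRoot.mk_leftInverse monic_modulus c⟩
  obtain ⟨p, rfl⟩ := AdjoinRoot.mk_surjective c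
  rw [AdjoinRoot.modByMonicHom_mk, ← degree_modulus (A := A)]
  exact degree_modByMonic_lt p monic_modulus

/-- The `j`-th coefficient of the representative of degree less than `n`. -/
def coeff (j : ℕ) : NegacyclicRing A n →ₗ[A] A :=
  lcoeff A j ∘ₗ AdjoinRoot.modByMonicHom monic_modulus

lemma coeff_mk {p : A[X]} (hp : p.degree < n) (j : ℕ) :
    coeff j (AdjoinRoot.mk _ p : NegacyclicRing A n) = p.coeff j := by
  nontriviality A
  have hmod : p %ₘ (X ^ n + 1) = p :=
    (modByMonic_eq_self_iff monic_modulus).2 (by rwa [degree_modulus])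
  rw [coeff, LinearMap.comp_apply, AdjoinRoot.modByMonicHom_mk, hmod, lcoeff_apply]

lemma coeff_one (j : ℕ) : coeff j (1 : NegacyclicRing A n) = if j = 0 then 1 else 0 := by
  have hdeg : (1 : A[X]).degree < n :=
    degree_one_le.trans_lt (by exact_mod_cast Nat.pos_of_neZero n)
  rw [← map_one (AdjoinRoot.mk _), coeff_mk hdeg, Polynomial.coeff_one]

lemma coeff_zero_x_add_one_pow {i : ℕ} (hi : i < n) :
    coeff 0 ((x + 1) ^ i : NegacyclicRing A n) = 1 := by
  have hdeg : ((X + 1 : A[X]) ^ i).degree < n :=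
    calc ((X + 1 : A[X]) ^ i).degree
        ≤ i * 1 := degree_pow_le_of_le i (by compute_degree)
      _ < n := by rw [mul_one]; exact_mod_cast hi
  have hmk : ((x + 1) ^ i : NegacyclicRing A n) = AdjoinRoot.mk _ ((X + 1) ^ i) := by
    rw [map_pow, map_add, AdjoinRoot.mk_X, map_one]
  rw [hmk, coeff_mk hdeg, coeff_zero_eq_eval_zero]
  simp

lemma degree_shift_lt {p : A[X]} (hp : p.degree < n) :
    (X * p - C (p.coeff (n - 1)) * (X ^ n + 1) : A[X]).degree < n := by
  rw [degree_lt_iff_coeff_zero] at hp ⊢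
  intro j hj
  obtain ⟨i, rfl⟩ : ∃ i, j = i + 1 :=
    Nat.exists_eq_succ_of_ne_zero ((Nat.pos_of_neZero n).trans_le hj).ne'
  rw [coeff_sub, coeff_X_mul, coeff_C_mul, coeff_add, coeff_X_pow, Polynomial.coeff_one]
  obtain rfl | hlt := hj.eq_or_lt
  · simp
  · simp [hlt.ne', hp i (Nat.le_of_lt_succ hlt)]

lemma coeff_x_mul_zero (c : NegacyclicRing A n) : coeff 0 (x * c) = -coeff (n - 1) c := by
  obtain ⟨p, hp, rfl⟩ := exists_mk_eq c
  rw [x_mul_mk, coeff_mk (degree_shift_lt hp), coeff_mk hp]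
  simp [coeff_X_pow, (NeZero.ne n).symm]

lemma coeff_x_mul_succ (c : NegacyclicRing A n) {j : ℕ} (hj : j + 1 < n) :
    coeff (j + 1) (x * c) = coeff j c := by
  obtain ⟨p, hp, rfl⟩ := exists_mk_eq c
  rw [x_mul_mk, coeff_mk (degree_shift_lt hp), coeff_mk hp]
  simp [coeff_X_pow, Polynomial.coeff_one, hj.ne]

/-- The dot product of coefficient vectors, as a bilinear form. -/
def dot : LinearMap.BilinForm A (NegacyclicRing A n) :=
  ∑ j ∈ Finset.range n, (LinearMap.mul A A).compl₁₂ (coeff j) (coeff j)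

lemma dot_apply (c d : NegacyclicRing A n) :
    dot c d = ∑ j ∈ Finset.range n, coeff j c * coeff j d := by
  simp [dot, LinearMap.sum_apply]

lemma dot_one_right (c : NegacyclicRing A n) : dot c 1 = coeff 0 c := by
  simp [dot_apply, coeff_one, NeZero.ne n]

lemma dot_x_mul_x_mul (c d : NegacyclicRing A n) : dot (x * c) (x * d) = dot c d := by
  obtain ⟨N, rfl⟩ := Nat.exists_eq_succ_of_ne_zero (NeZero.ne n)
  have hshift : ∀ j ∈ Finset.range N, coeff (j + 1) (x * c) * coeff (j + 1) (x * d) =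
      coeff j c * coeff j d := fun j hj => by
    have hj' : j + 1 < N + 1 := Nat.succ_lt_succ (Finset.mem_range.1 hj)
    rw [coeff_x_mul_succ c hj', coeff_x_mul_succ d hj']
  rw [dot_apply, dot_apply, Finset.sum_range_succ', Finset.sum_range_succ,
    Finset.sum_congr rfl hshift, coeff_x_mul_zero, coeff_x_mul_zero, neg_mul_neg,
    Nat.succ_sub_one]

lemma dot_x_add_one_mul (c d : NegacyclicRing A n) :
    dot ((x + 1) * c) d = dot (x * c) ((x + 1) * d) := by
  rw [add_one_mul, add_one_mul, map_add, map_add, LinearMap.add_apply, dot_x_mul_x_mul, add_comm]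

lemma dot_x_add_one_pow_mul (a : ℕ) (c d : NegacyclicRing A n) :
    dot ((x + 1) ^ a * c) d = dot (x ^ a * c) ((x + 1) ^ a * d) := by
  induction a generalizing c d with
  | zero => simp only [pow_zero, one_mul]
  | succ a ih =>
    calc dot ((x + 1) ^ (a + 1) * c) d
        = dot ((x + 1) * ((x + 1) ^ a * c)) d := by rw [pow_succ', mul_assoc]
      _ = dot ((x + 1) ^ a * (x * c)) ((x + 1) * d) := by
          rw [dot_x_add_one_mul, mul_left_comm]
      _ = dot (x ^ a * (x * c)) ((x + 1) ^ a * ((x + 1) * d)) := ih _ _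
      _ = dot (x ^ (a + 1) * c) ((x + 1) ^ (a + 1) * d) := by
          simp only [pow_succ, mul_assoc]

lemma dot_x_pow_mul_x_add_one_pow {a b : ℕ} (hab : a + b < n) :
    dot (x ^ a * (x + 1) ^ b : NegacyclicRing A n) ((x + 1) ^ a) = 1 := by
  rw [← mul_one ((x + 1) ^ a), ← dot_x_add_one_pow_mul, ← pow_add, dot_one_right,
    coeff_zero_x_add_one_pow hab]

lemma le_add_of_smul_mem {C : Ideal (NegacyclicRing A n)} (hC : ∀ c ∈ C, ∀ d ∈ C, dot c d = 0)
    {u v : A} (hv : v ≠ 0) (hvu : v * u = 0) {a k : ℕ} {f : NegacyclicRing A n}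
    (hf : (x + 1) ^ a + u • f ∈ C) (hk : v • (x + 1) ^ k ∈ C) : n ≤ a + k := by
  by_contra! hlt
  have hmem : v • (x ^ a * (x + 1) ^ k) ∈ C := by
    simpa only [mul_smul_comm] using C.mul_mem_left (x ^ a) hk
  refine hv ?_
  calc v = v * dot (x ^ a * (x + 1) ^ k) ((x + 1) ^ a) := by
          rw [dot_x_pow_mul_x_add_one_pow hlt, mul_one]
    _ = dot (v • (x ^ a * (x + 1) ^ k)) ((x + 1) ^ a + u • f) := by
          simp only [map_add, map_smul, LinearMap.smul_apply, smul_eq_mul, ← mul_assoc, hvu,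
            mul_comm u v, zero_mul, add_zero]
    _ = 0 := hC _ hmem _ hf

end NegacyclicRing

open NegacyclicRing in
theorem stmt17_general {A : Type*} [CommRing A] {n : ℕ} [NeZero n]
    {C : Ideal (NegacyclicRing A n)} (hC : ∀ c ∈ C, ∀ d ∈ C, dot c d = 0)
    {u v : A} (hv : v ≠ 0) (hvu : v * u = 0) {a b : ℕ} (hab : a + b = n)
    {f : NegacyclicRing A n} (hf : (x + 1) ^ a + u • f ∈ C) (hb : v • (x + 1) ^ b ∈ C) :
    IsLeast {k | v • (x + 1) ^ k ∈ C} b :=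
  ⟨hb, fun _ hk => Nat.le_of_add_le_add_left (hab.trans_le (le_add_of_smul_mem hC hv hvu hf hk))⟩

lemma dotR_eq_dot (m s : ℕ) (c d : RR m s) : dotR m s c d = NegacyclicRing.dot c d :=
  (NegacyclicRing.dot_apply c d).symm

lemma uR_mul (m s : ℕ) (c : RR m s) : uR m s * c = uu m • c :=
  (Algebra.smul_def _ _).symm

lemma uR_sq_mul (m s : ℕ) (c : RR m s) : uR m s ^ 2 * c = uu m ^ 2 • c := by
  rw [Algebra.smul_def, map_pow, uR]

lemma uu_sq_mul_uu (m : ℕ) : uu m ^ 2 * uu m = 0 := by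
  rw [← pow_succ, uu, ← AdjoinRoot.mk_X, ← map_pow, AdjoinRoot.mk_self]

lemma uu_sq_ne_zero (m : ℕ) : uu m ^ 2 ≠ 0 := by
  rw [uu, ← AdjoinRoot.mk_X, ← map_pow, Ne, AdjoinRoot.mk_eq_zero,
    pow_dvd_pow_iff X_ne_zero not_isUnit_X]
  decide

/-- For a self-dual code of the displayed form, `u²(x+1)^k ∉ C` for all
`k < 2^s − a`; equivalently `min{k : u²(x+1)^k ∈ C} = 2^s − a`. -/
theorem stmt17 (m s : ℕ) (hm : 0 < m) (hs : 0 < s)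
    (a t₁ t₂ t₃ : ℕ) (h₁ h₂ h₃ : KK m s)
    (ha1 : 1 ≤ a) (ha2 : a ≤ 2 ^ s - 1)
    (C : Ideal (RR m s))
    (hC : C = Ideal.span
      {(xR m s + 1) ^ a + uR m s * (xR m s + 1) ^ t₁ * KtoR m s h₁ +
         uR m s ^ 2 * (xR m s + 1) ^ t₂ * KtoR m s h₂,
       uR m s * (xR m s + 1) ^ (2 ^ (s - 1)) + uR m s ^ 2 * (xR m s + 1) ^ t₃ * KtoR m s h₃,
       uR m s ^ 2 * (xR m s + 1) ^ (2 ^ s - a)})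
    (hsd : IsSelfDual m s C) :
    (∀ k < 2 ^ s - a, uR m s ^ 2 * (xR m s + 1) ^ k ∉ C) ∧
    sInf {k : ℕ | uR m s ^ 2 * (xR m s + 1) ^ k ∈ C} = 2 ^ s - a := by
  have hleast : IsLeast {k | uR m s ^ 2 * (xR m s + 1) ^ k ∈ C} (2 ^ s - a) := by
    have horth : ∀ c ∈ C, ∀ d ∈ C, NegacyclicRing.dot c d = 0 := fun c hc d hd =>
      dotR_eq_dot m s c d ▸ hsd.subset hc d hd
    have hg : (xR m s + 1) ^ a + uu m • ((xR m s + 1) ^ t₁ * KtoR m s h₁ +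
        uR m s * ((xR m s + 1) ^ t₂ * KtoR m s h₂)) ∈ C := by
      rw [hC, ← uR_mul]
      exact Ideal.subset_span (Or.inl (by ring))
    have hb : uu m ^ 2 • (xR m s + 1) ^ (2 ^ s - a) ∈ C := by
      rw [hC, ← uR_sq_mul]
      exact Ideal.subset_span (by simp)
    simp only [uR_sq_mul]
    exact stmt17_general horth (uu_sq_ne_zero m) (uu_sq_mul_uu m) (by omega) hg hb
  exact ⟨fun k hk hmem => hk.not_ge (hleast.2 hmem), hleast.csInf_eq⟩
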